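/- Fix constants a, δ with a > 2δ ≥ 0. There exist constants C₁, C₂, C₃ > 0 depending only on a such that the following holds. Let (X_t)_{t≥0} be an integer-valued discrete-time process adapted to a filtration (F_t)_{t≥0} satisfying: X_{t+1} − X_t ∈ {−1, 0, 1} almost surely; E[X_{t+1} − X_t | F_t] ≥ −δ for all t; Var(X_{t+1} | F_t) ≥ a for all t; and X_0 ≥ 0 almost surely. Then for τ_r⁺ = inf{t ≥ 0 : X_t ≥ r} and every r > 0 and every integer t ≥ 1, P(τ_r⁺ ≤ t) ≥ C₁ exp(−C₂ (r/√t + δ√t)²) − C₃ t^{−1/2}. -/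

import Mathlib

open MeasureTheory

/-!
For small `θ > 0` the step bounds give `E[exp (θ (X_{t+1} - X_t)) | F_t] ≥ exp γ` with
`γ = a θ² / 16`, as soon as the quadratic gain `a θ²` beats the drift loss `δ θ`. Hence
`exp (θ X_t - γ t)`, held at `exp (θ (r + 1))` once `X` reaches `r`, is a bounded submartingale that
starts at or above `1`. Before the hitting time it is at most `exp (θ r - γ t)`, so
`1 ≤ exp (θ r - γ t) + exp (θ (r + 1)) P(τ ≤ t)`. With `y = r / √t + δ √t`, taking `θ` of order
`(y + 1) / √t` makes the first term at most `1 / 2` and the exponent `θ (r + 1)` of order `y² + 1`.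
The requirement `θ ≤ 1` fails only when `√t` is at most of order `y + 1`, where the term `C₃ / √t`
makes the claimed bound nonpositive.
-/

section ConditionalMoments

open scoped ProbabilityTheory

variable {Ω : Type*} {m m₀ : MeasurableSpace Ω} {μ : Measure Ω} [IsFiniteMeasure μ]

lemma condVar_eq_zero_of_not_integrable {X : Ω → ℝ} (hX : AEStronglyMeasurable X μ)
    (hX_int : ¬ Integrable X μ) : Var[X; μ | m] = 0 := by
  refine ProbabilityTheory.condVar_of_not_integrable fun h_sq ↦ hX_int ?_
  simp only [condExp_of_not_integrable hX_int, Pi.zero_apply, sub_zero] at h_sq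
  exact ((memLp_two_iff_integrable_sq hX).2 h_sq).integrable one_le_two

lemma condVar_sub_ae_eq_condVar {X Y : Ω → ℝ} (hm : m ≤ m₀) (hX : Integrable X μ)
    (hY : Integrable Y μ) (hY_meas : StronglyMeasurable[m] Y) :
    Var[X - Y; μ | m] =ᵐ[μ] Var[X; μ | m] := by
  refine condExp_congr_ae ?_
  filter_upwards [condExp_sub hX hY m] with ω hω
  simp only [Pi.pow_apply, Pi.sub_apply, hω, condExp_of_stronglyMeasurable hm hY_meas hY]
  ring

lemma condVar_ae_le_condExp_sub_sq {X Y : Ω → ℝ} (hm : m ≤ m₀) (hY : StronglyMeasurable[m] Y)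
    (hXY : MemLp (X - Y) 2 μ) : Var[X; μ | m] ≤ᵐ[μ] μ[(X - Y) ^ 2 | m] := by
  by_cases hX : Integrable X μ
  · have hY_int : Integrable Y μ := by simpa using hX.sub (hXY.integrable one_le_two)
    exact (condVar_sub_ae_eq_condVar hm hX hY_int hY).symm.trans_le
      (ProbabilityTheory.condVar_ae_le_condExp_sq hm hXY)
  · have hX_meas : AEStronglyMeasurable X μ := by
      simpa using hXY.aestronglyMeasurable.add (hY.mono hm).aestronglyMeasurable
    rw [condVar_eq_zero_of_not_integrable hX_meas hX]
    exact condExp_nonneg (.of_forall fun ω ↦ sq_nonneg _)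

lemma condVar_succ_ae_le_condExp_sub_sq {F : Filtration ℕ m₀} {X : ℕ → Ω → ℝ} {b : ℝ} {t : ℕ}
    (hX : Adapted F X) (h_step : ∀ᵐ ω ∂μ, |X (t + 1) ω - X t ω| ≤ b) :
    Var[X (t + 1); μ | F t] ≤ᵐ[μ] μ[(X (t + 1) - X t) ^ 2 | F t] := by
  have hX_meas (s : ℕ) : Measurable (X s) := (hX s).mono (F.le s) le_rfl
  exact condVar_ae_le_condExp_sub_sq (F.le t) (hX t).stronglyMeasurable
    (.of_bound ((hX_meas _).sub (hX_meas _)).aestronglyMeasurable b h_step)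

lemma add_mul_ae_le_condExp {f g h Z : Ω → ℝ} {c : ℝ} (hm : m ≤ m₀)
    (hf : StronglyMeasurable[m] f) (hg : StronglyMeasurable[m] g) (hf₀ : 0 ≤ f) (hg₀ : 0 ≤ g)
    (hh₀ : 0 ≤ h) (hh : Integrable h μ) (hZ : Integrable Z μ) (h_le : f + g * h ≤ᵐ[μ] Z)
    (hc : ∀ᵐ ω ∂μ, c ≤ (μ[h | m]) ω) :
    ∀ᵐ ω ∂μ, f ω + g ω * c ≤ (μ[Z | m]) ω := by
  have hf_int : Integrable f μ := by
    refine hZ.mono' (hf.mono hm).aestronglyMeasurable ?_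
    filter_upwards [h_le] with ω hω
    rw [Real.norm_of_nonneg (hf₀ ω)]
    exact (le_add_of_nonneg_right (mul_nonneg (hg₀ ω) (hh₀ ω))).trans hω
  have hgh_int : Integrable (g * h) μ := by
    refine hZ.mono' ((hg.mono hm).aestronglyMeasurable.mul hh.aestronglyMeasurable) ?_
    filter_upwards [h_le] with ω hω
    rw [Real.norm_of_nonneg (mul_nonneg hg₀ hh₀ ω)]
    exact (le_add_of_nonneg_left (hf₀ ω)).trans hω
  filter_upwards [condExp_mono (m := m) (hf_int.add hgh_int) hZ h_le,
    condExp_add hf_int hgh_int m, condExp_mul_of_stronglyMeasurable_left hg hgh_int hh, hc]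
    with ω h_mono h_add h_mul hc
  calc f ω + g ω * c ≤ f ω + g ω * (μ[h | m]) ω := by gcongr; exact hg₀ ω
    _ = (μ[f + g * h | m]) ω := by
        rw [h_add, Pi.add_apply, h_mul, Pi.mul_apply, condExp_of_stronglyMeasurable hm hf hf_int]
    _ ≤ (μ[Z | m]) ω := h_mono

end ConditionalMoments

section ExponentialMoment

lemma one_add_add_sq_div_four_le_exp {x : ℝ} (hx : |x| ≤ 1) :
    1 + x + x ^ 2 / 4 ≤ Real.exp x := by
  have h_taylor := Real.exp_bound hx (n := 3) (by norm_num)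
  norm_num [Finset.sum_range_succ, Nat.factorial] at h_taylor
  have h_cubic : |x| ^ 3 ≤ x ^ 2 := by
    rw [← sq_abs x]
    exact pow_le_pow_of_le_one (abs_nonneg x) hx (by norm_num)
  linarith [(abs_le.1 h_taylor).1, sq_nonneg x]

lemma exp_sq_div_sixteen_le {a δ θ : ℝ} (ha₀ : 0 ≤ a) (ha₁ : a ≤ 1) (hθ₀ : 0 ≤ θ) (hθ₁ : θ ≤ 1)
    (hδ : 8 * δ ≤ a * θ) :
    Real.exp (a * θ ^ 2 / 16) ≤ 1 - θ * δ + θ ^ 2 / 4 * a := by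
  have h_rate₀ : 0 ≤ a * θ ^ 2 / 16 := by positivity
  have h_rate₁ : a * θ ^ 2 ≤ 1 := mul_le_one₀ ha₁ (sq_nonneg θ) (pow_le_one₀ hθ₀ hθ₁)
  have h_exp := (abs_le.1 (Real.abs_exp_sub_one_le (x := a * θ ^ 2 / 16)
    (by rw [abs_of_nonneg h_rate₀]; linarith))).2
  rw [abs_of_nonneg h_rate₀] at h_exp
  linarith [mul_le_mul_of_nonneg_left hδ hθ₀]

variable {Ω : Type*} {m m₀ : MeasurableSpace Ω} {μ : Measure Ω} [IsFiniteMeasure μ]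

lemma integrable_exp_mul_of_ae_le {D : Ω → ℝ} {b θ : ℝ} (hD_meas : AEStronglyMeasurable D μ)
    (hD : ∀ᵐ ω ∂μ, D ω ≤ b) (hθ : 0 ≤ θ) : Integrable (fun ω ↦ Real.exp (θ * D ω)) μ := by
  refine .of_bound (Real.continuous_exp.comp_aestronglyMeasurable (hD_meas.const_mul θ))
    (Real.exp (θ * b)) ?_
  filter_upwards [hD] with ω hω
  rw [Real.norm_of_nonneg (Real.exp_pos _).le]
  gcongr

lemma le_condExp_exp_mul {D : Ω → ℝ} {a δ θ : ℝ} (hm : m ≤ m₀)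
    (hD_meas : AEStronglyMeasurable D μ) (hD : ∀ᵐ ω ∂μ, |D ω| ≤ 1)
    (h_drift : ∀ᵐ ω ∂μ, -δ ≤ (μ[D | m]) ω) (h_sq : ∀ᵐ ω ∂μ, a ≤ (μ[D ^ 2 | m]) ω)
    (hθ₀ : 0 ≤ θ) (hθ₁ : θ ≤ 1) :
    ∀ᵐ ω ∂μ, 1 - θ * δ + θ ^ 2 / 4 * a ≤ (μ[fun ω ↦ Real.exp (θ * D ω) | m]) ω := by
  have hD_int : Integrable D μ := .of_bound hD_meas 1 hD
  have hD_sq : Integrable (D ^ 2) μ := (MemLp.of_bound hD_meas 1 hD).integrable_sq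
  have h_exp_int : Integrable (fun ω ↦ Real.exp (θ * D ω)) μ :=
    integrable_exp_mul_of_ae_le hD_meas (hD.mono fun ω hω ↦ (abs_le.1 hω).2) hθ₀
  have h_lin_int : Integrable ((fun _ ↦ (1 : ℝ)) + θ • D) μ :=
    (integrable_const _).add (hD_int.smul θ)
  have h_taylor : (fun _ ↦ (1 : ℝ)) + θ • D + (θ ^ 2 / 4) • D ^ 2
      ≤ᵐ[μ] fun ω ↦ Real.exp (θ * D ω) := by
    filter_upwards [hD] with ω hω
    have h_abs : |θ * D ω| ≤ 1 := by
      rw [abs_mul, abs_of_nonneg hθ₀]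
      exact mul_le_one₀ hθ₁ (abs_nonneg _) hω
    refine le_of_eq_of_le ?_ (one_add_add_sq_div_four_le_exp h_abs)
    simp only [Pi.add_apply, Pi.smul_apply, Pi.pow_apply, smul_eq_mul]
    ring
  filter_upwards [condExp_mono (m := m) (h_lin_int.add (hD_sq.smul _)) h_exp_int h_taylor,
    condExp_add h_lin_int (hD_sq.smul (θ ^ 2 / 4)) m,
    condExp_add (integrable_const (1 : ℝ)) (hD_int.smul θ) m, condExp_smul θ D m,
    condExp_smul (θ ^ 2 / 4) (D ^ 2) m, h_drift, h_sq]
    with ω h_le h_add h_add' h_smul h_smul' h_drift h_sq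
  simp only [h_add, h_add', h_smul, h_smul', Pi.add_apply, Pi.smul_apply, smul_eq_mul,
    condExp_const hm] at h_le
  linarith [mul_le_mul_of_nonneg_left h_drift hθ₀,
    mul_le_mul_of_nonneg_left h_sq (by positivity : 0 ≤ θ ^ 2 / 4)]

end ExponentialMoment

section CappedExponential

variable {Ω : Type*} {X : ℕ → Ω → ℝ} {θ γ r : ℝ}

/-- The event `τ_r⁺ ≤ t` that the process `X` reaches the level `r` by time `t`. -/
def hitEvent (X : ℕ → Ω → ℝ) (r : ℝ) (t : ℕ) : Set Ω := {ω | ∃ s ≤ t, r ≤ X s ω}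

/-- The discounted exponential `exp (θ X_t - γ t)`, held at `exp (θ (r + 1))` from the time `X`
reaches `r` on. For steps at most `1` the held value dominates the one attained by a first crossing
at a positive time, and it keeps the process bounded even when `X 0` is not. -/
noncomputable def cappedExp (X : ℕ → Ω → ℝ) (θ γ r : ℝ) (t : ℕ) : Ω → ℝ :=
  (hitEvent X r t).indicator (fun _ ↦ Real.exp (θ * (r + 1))) +
    (hitEvent X r t)ᶜ.indicator fun ω ↦ Real.exp (θ * X t ω - γ * t)

lemma hitEvent_mono : Monotone (hitEvent X r) :=
  fun _ _ hst _ ⟨u, hu, h⟩ ↦ ⟨u, hu.trans hst, h⟩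

lemma lt_of_notMem_hitEvent {t : ℕ} {ω : Ω} (hω : ω ∉ hitEvent X r t) : X t ω < r :=
  not_le.1 fun h ↦ hω ⟨t, le_rfl, h⟩

lemma cappedExp_of_mem {t : ℕ} {ω : Ω} (hω : ω ∈ hitEvent X r t) :
    cappedExp X θ γ r t ω = Real.exp (θ * (r + 1)) := by
  simp [cappedExp, hω]

lemma cappedExp_of_notMem {t : ℕ} {ω : Ω} (hω : ω ∉ hitEvent X r t) :
    cappedExp X θ γ r t ω = Real.exp (θ * X t ω - γ * t) := by
  simp [cappedExp, hω]

lemma cappedExp_nonneg (t : ℕ) (ω : Ω) : 0 ≤ cappedExp X θ γ r t ω := by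
  by_cases hω : ω ∈ hitEvent X r t
  · rw [cappedExp_of_mem hω]; positivity
  · rw [cappedExp_of_notMem hω]; positivity

lemma cappedExp_le_of_notMem {t : ℕ} {ω : Ω} (hθ : 0 ≤ θ) (hω : ω ∉ hitEvent X r t) :
    cappedExp X θ γ r t ω ≤ Real.exp (θ * r - γ * t) := by
  rw [cappedExp_of_notMem hω]
  gcongr
  exact (lt_of_notMem_hitEvent hω).le

lemma cappedExp_le (hθ : 0 ≤ θ) (hγ : 0 ≤ γ) (t : ℕ) (ω : Ω) :
    cappedExp X θ γ r t ω ≤ Real.exp (θ * (r + 1)) := by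
  by_cases hω : ω ∈ hitEvent X r t
  · exact (cappedExp_of_mem hω).le
  · refine (cappedExp_le_of_notMem hθ hω).trans (Real.exp_le_exp.2 ?_)
    linarith [mul_nonneg hγ t.cast_nonneg]

lemma one_le_cappedExp_zero {ω : Ω} (hθ : 0 ≤ θ) (hr : 0 ≤ r) (h₀ : 0 ≤ X 0 ω) :
    1 ≤ cappedExp X θ γ r 0 ω := by
  by_cases hω : ω ∈ hitEvent X r 0
  · rw [cappedExp_of_mem hω]
    exact Real.one_le_exp (by positivity)
  · rw [cappedExp_of_notMem hω, Nat.cast_zero, mul_zero, sub_zero]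
    exact Real.one_le_exp (by positivity)

lemma indicator_add_mul_exp_le_cappedExp_succ {t : ℕ} {ω : Ω} (hθ : 0 ≤ θ) (hγ : 0 ≤ γ)
    (h_step : X (t + 1) ω - X t ω ≤ 1) :
    (hitEvent X r t).indicator (fun _ ↦ Real.exp (θ * (r + 1))) ω +
        (hitEvent X r t)ᶜ.indicator (fun ω ↦ Real.exp (θ * X t ω - γ * (t + 1))) ω *
          Real.exp (θ * (X (t + 1) ω - X t ω)) ≤
      cappedExp X θ γ r (t + 1) ω := by
  by_cases hω : ω ∈ hitEvent X r t
  · simp [hω, cappedExp_of_mem (hitEvent_mono t.le_succ hω)]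
  · simp only [hω, Set.mem_compl_iff, not_false_eq_true, Set.indicator_of_notMem,
      Set.indicator_of_mem, zero_add, ← Real.exp_add]
    by_cases hω' : ω ∈ hitEvent X r (t + 1)
    · rw [cappedExp_of_mem hω', Real.exp_le_exp]
      have h_overshoot : X (t + 1) ω ≤ r + 1 := by linarith [lt_of_notMem_hitEvent hω]
      linarith [mul_le_mul_of_nonneg_left h_overshoot hθ,
        mul_nonneg hγ (by positivity : (0 : ℝ) ≤ t + 1)]
    · rw [cappedExp_of_notMem hω', Nat.cast_succ]
      exact (congrArg Real.exp (by ring)).le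

lemma cappedExp_eq_indicator_add_mul_exp (t : ℕ) (ω : Ω) :
    cappedExp X θ γ r t ω =
      (hitEvent X r t).indicator (fun _ ↦ Real.exp (θ * (r + 1))) ω +
        (hitEvent X r t)ᶜ.indicator (fun ω ↦ Real.exp (θ * X t ω - γ * (t + 1))) ω *
          Real.exp γ := by
  by_cases hω : ω ∈ hitEvent X r t
  · simp [cappedExp, hω]
  · simp only [cappedExp_of_notMem hω, hω, Set.mem_compl_iff, not_false_eq_true,
      Set.indicator_of_notMem, Set.indicator_of_mem, zero_add, ← Real.exp_add]
    ring_nf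

variable {m : MeasurableSpace Ω} {μ : Measure Ω} {F : Filtration ℕ m}

lemma measurableSet_hitEvent (hX : Adapted F X) (t : ℕ) : MeasurableSet[F t] (hitEvent X r t) := by
  have h_union : hitEvent X r t = ⋃ s ≤ t, {ω | r ≤ X s ω} := by ext ω; simp [hitEvent]
  rw [h_union]
  exact .biUnion (Set.to_countable _) fun s hs ↦
    F.mono hs _ (measurableSet_le measurable_const (hX s))

lemma stronglyMeasurable_cappedExp (hX : Adapted F X) (t : ℕ) :
    StronglyMeasurable[F t] (cappedExp X θ γ r t) := by
  have h_hit := measurableSet_hitEvent (r := r) hX t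
  have h_exp : Measurable[F t] fun ω ↦ Real.exp (θ * X t ω - γ * t) :=
    Real.measurable_exp.comp (((hX t).const_mul θ).sub_const _)
  exact (stronglyMeasurable_const.indicator h_hit).add
    (h_exp.stronglyMeasurable.indicator h_hit.compl)

lemma integrable_cappedExp [IsFiniteMeasure μ] (hX : Adapted F X) (hθ : 0 ≤ θ) (hγ : 0 ≤ γ)
    (t : ℕ) : Integrable (cappedExp X θ γ r t) μ := by
  refine .of_bound ((stronglyMeasurable_cappedExp hX t).mono (F.le t)).aestronglyMeasurable
    (Real.exp (θ * (r + 1))) (.of_forall fun ω ↦ ?_)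
  rw [Real.norm_of_nonneg (cappedExp_nonneg t ω)]
  exact cappedExp_le hθ hγ t ω

lemma cappedExp_le_condExp_succ [IsFiniteMeasure μ] (hX : Adapted F X) {t : ℕ}
    (h_step : ∀ᵐ ω ∂μ, X (t + 1) ω - X t ω ≤ 1)
    (h_exp : ∀ᵐ ω ∂μ,
      Real.exp γ ≤ (μ[fun ω ↦ Real.exp (θ * (X (t + 1) ω - X t ω)) | F t]) ω)
    (hθ : 0 ≤ θ) (hγ : 0 ≤ γ) :
    cappedExp X θ γ r t ≤ᵐ[μ] μ[cappedExp X θ γ r (t + 1) | F t] := by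
  have h_hit := measurableSet_hitEvent (r := r) hX t
  have hX_meas (s : ℕ) : Measurable (X s) := (hX s).mono (F.le s) le_rfl
  have h_exp_meas : Measurable[F t] fun ω ↦ Real.exp (θ * X t ω - γ * (t + 1)) :=
    Real.measurable_exp.comp (((hX t).const_mul θ).sub_const _)
  have h_growth_int : Integrable (fun ω ↦ Real.exp (θ * (X (t + 1) ω - X t ω))) μ :=
    integrable_exp_mul_of_ae_le ((hX_meas _).sub (hX_meas _)).aestronglyMeasurable h_step hθ
  filter_upwards [add_mul_ae_le_condExp (F.le t) (stronglyMeasurable_const.indicator h_hit)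
    (h_exp_meas.stronglyMeasurable.indicator h_hit.compl)
    (Set.indicator_nonneg fun _ _ ↦ (Real.exp_pos _).le)
    (Set.indicator_nonneg fun _ _ ↦ (Real.exp_pos _).le) (fun _ ↦ (Real.exp_pos _).le)
    h_growth_int (integrable_cappedExp hX hθ hγ (t + 1))
    (h_step.mono fun ω ↦ indicator_add_mul_exp_le_cappedExp_succ hθ hγ) h_exp] with ω hω
  exact (cappedExp_eq_indicator_add_mul_exp t ω).trans_le hω

lemma submartingale_cappedExp [IsFiniteMeasure μ] (hX : Adapted F X)
    (h_step : ∀ t : ℕ, ∀ᵐ ω ∂μ, X (t + 1) ω - X t ω ≤ 1)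
    (h_exp : ∀ t : ℕ, ∀ᵐ ω ∂μ,
      Real.exp γ ≤ (μ[fun ω ↦ Real.exp (θ * (X (t + 1) ω - X t ω)) | F t]) ω)
    (hθ : 0 ≤ θ) (hγ : 0 ≤ γ) : Submartingale (cappedExp X θ γ r) F μ :=
  submartingale_nat (stronglyMeasurable_cappedExp hX) (integrable_cappedExp hX hθ hγ)
    fun t ↦ cappedExp_le_condExp_succ hX (h_step t) (h_exp t) hθ hγ

lemma integral_cappedExp_le [IsProbabilityMeasure μ] (hX : Adapted F X) (hθ : 0 ≤ θ) (hγ : 0 ≤ γ)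
    (t : ℕ) :
    ∫ ω, cappedExp X θ γ r t ω ∂μ ≤
      Real.exp (θ * r - γ * t) + Real.exp (θ * (r + 1)) * μ.real (hitEvent X r t) := by
  have h_hit : MeasurableSet (hitEvent X r t) := F.le t _ (measurableSet_hitEvent hX t)
  have h_ind_int : Integrable
      ((hitEvent X r t).indicator fun _ ↦ Real.exp (θ * (r + 1))) μ :=
    (integrable_const _).indicator h_hit
  calc ∫ ω, cappedExp X θ γ r t ω ∂μ
      ≤ ∫ ω, Real.exp (θ * r - γ * t) +
          (hitEvent X r t).indicator (fun _ ↦ Real.exp (θ * (r + 1))) ω ∂μ := by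
        refine integral_mono (integrable_cappedExp hX hθ hγ t)
          ((integrable_const _).add h_ind_int) fun ω ↦ ?_
        by_cases hω : ω ∈ hitEvent X r t
        · simp [cappedExp_of_mem, hω, (Real.exp_pos _).le]
        · simpa [hω] using cappedExp_le_of_notMem hθ hω
    _ = Real.exp (θ * r - γ * t) + Real.exp (θ * (r + 1)) * μ.real (hitEvent X r t) := by
        rw [integral_add (integrable_const _) h_ind_int, integral_indicator_const _ h_hit]
        simp [mul_comm]

lemma one_le_exp_add_exp_mul_measureReal_hitEvent [IsProbabilityMeasure μ] (hX : Adapted F X)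
    (h_step : ∀ t : ℕ, ∀ᵐ ω ∂μ, X (t + 1) ω - X t ω ≤ 1)
    (h_exp : ∀ t : ℕ, ∀ᵐ ω ∂μ,
      Real.exp γ ≤ (μ[fun ω ↦ Real.exp (θ * (X (t + 1) ω - X t ω)) | F t]) ω)
    (h₀ : ∀ᵐ ω ∂μ, 0 ≤ X 0 ω) (hθ : 0 ≤ θ) (hγ : 0 ≤ γ) (hr : 0 ≤ r) (t : ℕ) :
    1 ≤ Real.exp (θ * r - γ * t) + Real.exp (θ * (r + 1)) * μ.real (hitEvent X r t) := by
  have h_sub : Submartingale (cappedExp X θ γ r) F μ :=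
    submartingale_cappedExp hX h_step h_exp hθ hγ
  calc (1 : ℝ) = ∫ _, 1 ∂μ := by simp
    _ ≤ ∫ ω, cappedExp X θ γ r 0 ω ∂μ :=
        integral_mono_ae (integrable_const _) (h_sub.integrable 0)
          (h₀.mono fun ω ↦ one_le_cappedExp_zero hθ hr)
    _ ≤ ∫ ω, cappedExp X θ γ r t ω ∂μ := by
        simpa using h_sub.setIntegral_le t.zero_le MeasurableSet.univ
    _ ≤ _ := integral_cappedExp_le hX hθ hγ t

end CappedExponential

section HittingProbability

lemma exp_neg_mul_sq_le_div {K q y : ℝ} (hK : 1 ≤ K) (hq : 0 < q) (hqy : q ≤ K * (y + 1)) :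
    Real.exp (-(2 * K) * y ^ 2) ≤ 2 * K / q := by
  have h_exp : 1 + y ^ 2 ≤ Real.exp (2 * K * y ^ 2) := by
    nlinarith [Real.add_one_le_exp (2 * K * y ^ 2), sq_nonneg y]
  rw [neg_mul, Real.exp_neg, ← one_div, div_le_div_iff₀ (Real.exp_pos _) hq]
  calc 1 * q ≤ K * (y + 1) := by rwa [one_mul]
    _ ≤ K * (2 * (1 + y ^ 2)) := by gcongr; linarith [sq_nonneg (y - 1), sq_nonneg y]
    _ ≤ K * (2 * Real.exp (2 * K * y ^ 2)) := by gcongr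
    _ = 2 * K * Real.exp (2 * K * y ^ 2) := by ring

variable {Ω : Type*} {m : MeasurableSpace Ω} {μ : Measure Ω} [IsProbabilityMeasure μ]
  {F : Filtration ℕ m} {X : ℕ → Ω → ℝ} {a δ r : ℝ}

lemma exp_neg_div_two_le_measureReal_hitEvent {θ : ℝ} {t : ℕ} (hX : Adapted F X)
    (h_step : ∀ t : ℕ, ∀ᵐ ω ∂μ, |X (t + 1) ω - X t ω| ≤ 1)
    (h_drift : ∀ t : ℕ, ∀ᵐ ω ∂μ, -δ ≤ (μ[X (t + 1) - X t | F t]) ω)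
    (h_sq : ∀ t : ℕ, ∀ᵐ ω ∂μ, a ≤ (μ[(X (t + 1) - X t) ^ 2 | F t]) ω)
    (h₀ : ∀ᵐ ω ∂μ, 0 ≤ X 0 ω) (ha₀ : 0 ≤ a) (ha₁ : a ≤ 1) (hr : 0 ≤ r)
    (hθ₀ : 0 ≤ θ) (hθ₁ : θ ≤ 1) (hθδ : 8 * δ ≤ a * θ) (hθr : θ * r + 1 ≤ a * θ ^ 2 / 16 * t) :
    Real.exp (-(θ * (r + 1))) / 2 ≤ μ.real (hitEvent X r t) := by
  have hX_meas (s : ℕ) : Measurable (X s) := (hX s).mono (F.le s) le_rfl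
  have h_exp (s : ℕ) : ∀ᵐ ω ∂μ, Real.exp (a * θ ^ 2 / 16) ≤
      (μ[fun ω ↦ Real.exp (θ * (X (s + 1) ω - X s ω)) | F s]) ω :=
    (le_condExp_exp_mul (F.le s) ((hX_meas _).sub (hX_meas _)).aestronglyMeasurable (h_step s)
      (h_drift s) (h_sq s) hθ₀ hθ₁).mono
      fun ω ↦ (exp_sq_div_sixteen_le ha₀ ha₁ hθ₀ hθ₁ hθδ).trans
  have h_one := one_le_exp_add_exp_mul_measureReal_hitEvent hX
    (fun s ↦ (h_step s).mono fun ω hω ↦ (abs_le.1 hω).2) h_exp h₀ hθ₀ (by positivity) hr t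
  have h_half : Real.exp (θ * r - a * θ ^ 2 / 16 * t) ≤ 1 / 2 := by
    calc Real.exp (θ * r - a * θ ^ 2 / 16 * t) ≤ Real.exp (-1) := by gcongr; linarith
      _ ≤ 1 / 2 := by
          rw [Real.exp_neg, ← one_div]
          gcongr
          linarith [Real.add_one_le_exp 1]
  rw [Real.exp_neg, inv_eq_one_div, div_div, div_le_iff₀ (by positivity)]
  linarith

lemma exp_neg_div_two_le_measureReal_hitEvent_of_le_sqrt {y : ℝ} {t : ℕ} (hX : Adapted F X)
    (h_step : ∀ t : ℕ, ∀ᵐ ω ∂μ, |X (t + 1) ω - X t ω| ≤ 1)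
    (h_drift : ∀ t : ℕ, ∀ᵐ ω ∂μ, -δ ≤ (μ[X (t + 1) - X t | F t]) ω)
    (h_sq : ∀ t : ℕ, ∀ᵐ ω ∂μ, a ≤ (μ[(X (t + 1) - X t) ^ 2 | F t]) ω)
    (h₀ : ∀ᵐ ω ∂μ, 0 ≤ X 0 ω) (ha₀ : 0 < a) (ha₁ : a ≤ 1) (hr : 0 ≤ r) (hy : 0 ≤ y)
    (hry : r ≤ y * Real.sqrt t) (hδy : δ * Real.sqrt t ≤ y)
    (hyt : 16 / a * (y + 1) ≤ Real.sqrt t) :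
    Real.exp (-(16 / a + 1 + 2 * (16 / a) * y ^ 2)) / 2 ≤ μ.real (hitEvent X r t) := by
  set K := 16 / a with hK
  have haK : a * K = 16 := mul_div_cancel₀ 16 ha₀.ne'
  have hK₁ : 1 ≤ K := by rw [hK, one_le_div ha₀]; linarith
  set q := Real.sqrt t
  have hq₀ : 0 < q := lt_of_lt_of_le (by positivity) hyt
  have hq_sq : q ^ 2 = t := Real.sq_sqrt t.cast_nonneg
  set θ := K * (y + 1) / q
  have hθq : θ * q = K * (y + 1) := div_mul_cancel₀ _ hq₀.ne'
  have hθ₀ : 0 ≤ θ := by positivity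
  have hθ₁ : θ ≤ 1 := (div_le_one hq₀).2 hyt
  have hθδ : 8 * δ ≤ a * θ := by
    refine le_of_mul_le_mul_right ?_ hq₀
    rw [mul_assoc a, hθq, ← mul_assoc, haK]
    linarith
  have hθr : θ * r ≤ K * (y + 1) * y := by
    rw [← hθq, mul_assoc, mul_comm q]
    gcongr
  have h_rate : a * θ ^ 2 / 16 * t = K * (y + 1) ^ 2 := by
    rw [← hq_sq]
    linear_combination a / 16 * (θ * q + K * (y + 1)) * hθq + K * (y + 1) ^ 2 / 16 * haK
  have h_exponent : θ * (r + 1) ≤ K + 1 + 2 * K * y ^ 2 := by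
    nlinarith [mul_nonneg (zero_le_one.trans hK₁) (sq_nonneg (y - 1))]
  calc Real.exp (-(K + 1 + 2 * K * y ^ 2)) / 2
      ≤ Real.exp (-(θ * (r + 1))) / 2 := by gcongr
    _ ≤ μ.real (hitEvent X r t) :=
        exp_neg_div_two_le_measureReal_hitEvent hX h_step h_drift h_sq h₀ ha₀.le ha₁ hr
          hθ₀ hθ₁ hθδ (by rw [h_rate]; nlinarith)

lemma exp_mul_exp_sub_div_sqrt_le_measureReal_hitEvent {t : ℕ} (hX : Adapted F X)
    (h_step : ∀ t : ℕ, ∀ᵐ ω ∂μ, |X (t + 1) ω - X t ω| ≤ 1)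
    (h_drift : ∀ t : ℕ, ∀ᵐ ω ∂μ, -δ ≤ (μ[X (t + 1) - X t | F t]) ω)
    (h_sq : ∀ t : ℕ, ∀ᵐ ω ∂μ, a ≤ (μ[(X (t + 1) - X t) ^ 2 | F t]) ω)
    (h₀ : ∀ᵐ ω ∂μ, 0 ≤ X 0 ω) (ha₀ : 0 < a) (ha₁ : a ≤ 1) (hδ : 0 ≤ δ) (hr : 0 ≤ r)
    (ht : 1 ≤ t) :
    Real.exp (-(16 / a + 1)) / 2 *
        Real.exp (-(2 * (16 / a)) * (r / Real.sqrt t + δ * Real.sqrt t) ^ 2) -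
      2 * (16 / a) / Real.sqrt t ≤ μ.real (hitEvent X r t) := by
  set K := 16 / a with hK
  have hK₁ : 1 ≤ K := by rw [hK, one_le_div ha₀]; linarith
  set q := Real.sqrt t
  have hq₀ : 0 < q := Real.sqrt_pos.2 (by positivity)
  set y := r / q + δ * q
  rcases le_total q (K * (y + 1)) with h_short | h_long
  · have h_const : Real.exp (-(K + 1)) / 2 ≤ 1 := by
      linarith [Real.exp_le_one_iff.2 (by linarith : -(K + 1) ≤ 0)]
    have h_error := exp_neg_mul_sq_le_div hK₁ hq₀ h_short
    linarith [mul_le_of_le_one_left (Real.exp_pos (-(2 * K) * y ^ 2)).le h_const,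
      measureReal_nonneg (μ := μ) (s := hitEvent X r t)]
  · have hry : r ≤ y * q := (div_le_iff₀ hq₀).1 (le_add_of_nonneg_right (by positivity))
    have hδy : δ * q ≤ y := le_add_of_nonneg_left (by positivity)
    calc Real.exp (-(K + 1)) / 2 * Real.exp (-(2 * K) * y ^ 2) - 2 * K / q
        ≤ Real.exp (-(K + 1)) / 2 * Real.exp (-(2 * K) * y ^ 2) := sub_le_self _ (by positivity)
      _ = Real.exp (-(K + 1 + 2 * K * y ^ 2)) / 2 := by
          rw [div_mul_eq_mul_div, ← Real.exp_add]; ring_nf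
      _ ≤ μ.real (hitEvent X r t) :=
          exp_neg_div_two_le_measureReal_hitEvent_of_le_sqrt hX h_step h_drift h_sq h₀ ha₀ ha₁ hr
            (by positivity) hry hδy h_long

end HittingProbability

theorem hitting_time_lower_bound_general (a : ℝ) (ha : 0 < a) :
    ∃ C₁ C₂ C₃ : ℝ, 0 < C₁ ∧ 0 < C₂ ∧ 0 < C₃ ∧
      ∀ (δ : ℝ), 0 ≤ δ →
        ∀ (Ω : Type*) [m : MeasurableSpace Ω] (μ : Measure Ω) [IsProbabilityMeasure μ]
          (F : Filtration ℕ m) (X : ℕ → Ω → ℝ), Adapted F X →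
          (∀ t : ℕ, ∀ᵐ ω ∂μ, |X (t + 1) ω - X t ω| ≤ 1) →
          (∀ t : ℕ, ∀ᵐ ω ∂μ, -δ ≤ (μ[X (t + 1) - X t | F t]) ω) →
          (∀ t : ℕ, ∀ᵐ ω ∂μ, a ≤ (μ[(X (t + 1) - X t) ^ 2 | F t]) ω) →
          (∀ᵐ ω ∂μ, 0 ≤ X 0 ω) →
          ∀ (r : ℝ), 0 < r → ∀ (t : ℕ), 1 ≤ t →
            C₁ * Real.exp (-C₂ * (r / Real.sqrt t + δ * Real.sqrt t) ^ 2)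
                - C₃ / Real.sqrt t ≤ μ.real (hitEvent X r t) := by
  have ha₀ : 0 < min a 1 := lt_min ha one_pos
  refine ⟨Real.exp (-(16 / min a 1 + 1)) / 2, 2 * (16 / min a 1), 2 * (16 / min a 1),
    by positivity, by positivity, by positivity, ?_⟩
  intro δ hδ Ω _ μ _ F X hX h_step h_drift h_sq h₀ r hr t ht
  exact exp_mul_exp_sub_div_sqrt_le_measureReal_hitEvent hX h_step h_drift
    (fun s ↦ (h_sq s).mono fun ω ↦ (min_le_left a 1).trans) h₀ ha₀ (min_le_right a 1) hδ hr.le ht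

/-- **Hitting-time lower bound** (Lemma 2.2). Fix `a > 2δ ≥ 0`. There are
constants `C₁, C₂, C₃ > 0` depending only on `a` such that: for every
integer-valued adapted process with `±1` (or `0`) steps, conditional drift at
least `−δ`, conditional variance at least `a`, and `X₀ ≥ 0`, the probability of
reaching level `r` by time `t` is at least
`C₁ exp(−C₂ (r/√t + δ√t)²) − C₃ t^{−1/2}`. -/
theorem hitting_time_lower_bound (a : ℝ) (ha : 0 < a) :
    ∃ C₁ C₂ C₃ : ℝ, 0 < C₁ ∧ 0 < C₂ ∧ 0 < C₃ ∧
      ∀ (δ : ℝ), 0 ≤ δ → 2 * δ < a →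
        ∀ (Ω : Type) [m : MeasurableSpace Ω] (μ : Measure Ω) [IsProbabilityMeasure μ]
          (F : Filtration ℕ m) (X : ℕ → Ω → ℝ), Adapted F X →
          (∀ t : ℕ, ∀ᵐ ω ∂μ, X (t + 1) ω - X t ω ∈ ({-1, 0, 1} : Set ℝ)) →
          (∀ t : ℕ, ∀ᵐ ω ∂μ, ∃ k : ℤ, X t ω = (k : ℝ)) →
          (∀ t : ℕ, ∀ᵐ ω ∂μ, -δ ≤ (μ[X (t + 1) - X t|F t]) ω) →
          (∀ t : ℕ, ∀ᵐ ω ∂μ,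
            a ≤ (μ[(X (t + 1) - μ[X (t + 1)|F t]) ^ 2|F t]) ω) →
          (∀ᵐ ω ∂μ, 0 ≤ X 0 ω) →
          ∀ (r : ℝ), 0 < r → ∀ (t : ℕ), 1 ≤ t →
            C₁ * Real.exp (-C₂ * (r / Real.sqrt t + δ * Real.sqrt t) ^ 2)
                - C₃ / Real.sqrt t ≤
              (μ {ω | ∃ s ≤ t, r ≤ X s ω}).toReal := by
  obtain ⟨C₁, C₂, C₃, hC₁, hC₂, hC₃, h_bound⟩ := hitting_time_lower_bound_general a ha
  refine ⟨C₁, C₂, C₃, hC₁, hC₂, hC₃, fun δ hδ _ Ω _ μ _ F X hX h_step _ h_drift h_var ↦ ?_⟩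
  have h_abs (t : ℕ) : ∀ᵐ ω ∂μ, |X (t + 1) ω - X t ω| ≤ 1 :=
    (h_step t).mono fun ω hω ↦ by rcases hω with h | h | h <;> simp_all
  exact h_bound δ hδ Ω μ F X hX h_abs h_drift fun t ↦
    Filter.EventuallyLE.trans (h_var t) (condVar_succ_ae_le_condExp_sub_sq hX (h_abs t))
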